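/- Let X be a compact Hausdorff space and f : X → X a homeomorphism. Suppose N_1 and N_2 are compact subsets with X = N_1 ∪ N_2, f^{-1}(N_1) ⊆ int(N_1), and f(N_2) ⊆ int(N_2). Set S_1 = ⋂_{h≥1} f^{-h}(N_1) and S_2 = ⋂_{h≥1} f^h(N_2). Then the nonwandering set of f is contained in S_1 ∪ S_2: Ω(f) ⊆ S_1 ∪ S_2. (This is the concluding step in the proof of the IF part of Theorem 2 of the paper, showing that the constructed diffeomorphism has nonwandering set equal to the union of the two solenoids.) -/

import Mathlib

/-- The nonwandering set of a map `f`: points `x` such that for every neighborhood `U`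
of `x` there are infinitely many positive integers `n` with `f^n(U) ∩ U ≠ ∅`. -/
def nonwanderingSet {X : Type*} [TopologicalSpace X] (f : X → X) : Set X :=
  {x | ∀ U ∈ nhds x, {n : ℕ | 0 < n ∧ ((f^[n]) '' U ∩ U).Nonempty}.Infinite}

/-!
If the orbit of a nonwandering point `x` leaves the closed set `N₁`, then at some time `h` it lies
in the interior of the forward invariant set `N₂`, and so do the orbits of all points near `x`.
Such a nearby orbit stays in `N₂` from time `h` on, so when it returns close to `x` after more than
`h + k` steps it lies in `f^k(N₂)`. As `k` is arbitrary, `x` is in the closure of every `f^k(N₂)`.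
-/

theorem image_iterate_eq_preimage_iterate_of_inverse {α : Type*} {f g : α → α}
    (hfg : Function.LeftInverse f g) (hgf : Function.LeftInverse g f) (n : ℕ) (s : Set α) :
    g^[n] '' s = f^[n] ⁻¹' s :=
  congr_fun (Set.image_eq_preimage_of_inverse (hfg.iterate n) (hgf.iterate n)) s

theorem iterate_mem_image_iterate_of_add_le {α : Type*} {f : α → α} {N : Set α}
    (hN : Set.MapsTo f N N) {y : α} {h k n : ℕ} (hy : f^[h] y ∈ N) (hn : k + h ≤ n) :
    f^[n] y ∈ f^[k] '' N := by
  obtain ⟨m, rfl⟩ := Nat.exists_eq_add_of_le hn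
  refine ⟨f^[m] (f^[h] y), hN.iterate m hy, ?_⟩
  rw [← Function.iterate_add_apply, ← Function.iterate_add_apply]
  congr 1
  omega

section Nonwandering

variable {X : Type*} [TopologicalSpace X] {f : X → X}

theorem exists_gt_iterate_mem_of_mem_nonwanderingSet {x : X} (hx : x ∈ nonwanderingSet f)
    {U : Set X} (hU : U ∈ nhds x) (m : ℕ) : ∃ n > m, ∃ y ∈ U, f^[n] y ∈ U := by
  obtain ⟨n, ⟨_, _, ⟨y, hyU, rfl⟩, hfyU⟩, hmn⟩ := (hx U hU).exists_gt m
  exact ⟨n, hmn, y, hyU, hfyU⟩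

theorem mem_closure_image_iterate_of_mem_nonwanderingSet (hf : Continuous f) {N : Set X}
    (hN : Set.MapsTo f N N) {x : X} (hx : x ∈ nonwanderingSet f) {h : ℕ}
    (hxN : f^[h] x ∈ interior N) (k : ℕ) : x ∈ closure (f^[k] '' N) := by
  refine mem_closure_iff_nhds.2 fun U hU => ?_
  have hV : U ∩ f^[h] ⁻¹' N ∈ nhds x :=
    Filter.inter_mem hU ((hf.iterate h).continuousAt (mem_interior_iff_mem_nhds.1 hxN))
  obtain ⟨n, hn, y, ⟨_, hyN⟩, hyU, _⟩ :=
    exists_gt_iterate_mem_of_mem_nonwanderingSet hx hV (k + h)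
  exact ⟨f^[n] y, hyU, iterate_mem_image_iterate_of_add_le hN hyN hn.le⟩

theorem nonwandering_subset_union_general (hf : Continuous f) {N₁ N₂ : Set X}
    (hN₁ : IsClosed N₁) (hcover : N₁ ∪ N₂ = Set.univ) (hN₂ : Set.MapsTo f N₂ N₂) :
    nonwanderingSet f ⊆ (⋂ h : ℕ, f^[h] ⁻¹' N₁) ∪ ⋂ k : ℕ, closure (f^[k] '' N₂) := by
  intro x hx
  refine or_iff_not_imp_left.2 fun hxN₁ => Set.mem_iInter.2 fun k => ?_
  obtain ⟨h, hh⟩ : ∃ h : ℕ, f^[h] x ∉ N₁ := by simpa using hxN₁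
  have hcompl : N₁ᶜ ⊆ interior N₂ :=
    interior_maximal (Set.compl_subset_iff_union.2 hcover) hN₁.isOpen_compl
  exact mem_closure_image_iterate_of_mem_nonwanderingSet hf hN₂ hx (hcompl hh) k

end Nonwandering

/-- If `X = N₁ ∪ N₂` with `N₁` a trapping region for `f⁻¹` and `N₂` a trapping region for `f`,
then the nonwandering set of `f` is contained in the union of the repeller
`S₁ = ⋂_{h ≥ 1} f^{-h}(N₁)` and the attractor `S₂ = ⋂_{h ≥ 1} f^h(N₂)`. -/
theorem nonwandering_subset_union {X : Type*} [TopologicalSpace X] [CompactSpace X] [T2Space X]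
    (f : X ≃ₜ X) (N₁ N₂ : Set X)
    (h₁comp : IsCompact N₁) (h₂comp : IsCompact N₂) (hcover : N₁ ∪ N₂ = Set.univ)
    (h₁trap : (⇑f.symm) '' N₁ ⊆ interior N₁) (h₂trap : (⇑f) '' N₂ ⊆ interior N₂)
    (S₁ S₂ : Set X)
    (hS₁ : S₁ = ⋂ h ∈ {h : ℕ | 1 ≤ h}, (⇑f.symm)^[h] '' N₁)
    (hS₂ : S₂ = ⋂ h ∈ {h : ℕ | 1 ≤ h}, (⇑f)^[h] '' N₂) :
    nonwanderingSet ⇑f ⊆ S₁ ∪ S₂ := by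
  have hmaps : Set.MapsTo f N₂ N₂ := Set.mapsTo_iff_image_subset.2 (h₂trap.trans interior_subset)
  have hclosure (k : ℕ) : closure (f^[k] '' N₂) = f^[k] '' N₂ :=
    (h₂comp.image (f.continuous.iterate k)).isClosed.closure_eq
  have hsubset := nonwandering_subset_union_general f.continuous h₁comp.isClosed hcover hmaps
  simp only [hclosure, ← image_iterate_eq_preimage_iterate_of_inverse f.apply_symm_apply
    f.symm_apply_apply] at hsubset
  rw [hS₁, hS₂]
  exact hsubset.trans
    (Set.union_subset_union (Set.iInter_subset_iInter₂ _ _) (Set.iInter_subset_iInter₂ _ _))
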